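/- Let c : ℕ × ℕ → ℝ with K := sup { ∑_{k=1}^∞ |c_{ki}|² : i ∈ ℕ } < ∞. Then for all square-summable real sequences v, w, the sequence k ↦ ∑_{i=1}^∞ v_i w_i c_{ki} is square-summable and (∑_{k=1}^∞ |∑_{i=1}^∞ v_i w_i c_{ki}|²)^{1/2} ≤ K^{1/2} · ‖v‖ · ‖w‖. -/

import Mathlib

/-!
Each column `C i = (c (k, i))_k` is a vector of `ℓ²` of norm at most `√K`, and by Cauchy–Schwarz
`∑ |v i * w i| ≤ ‖v‖ ‖w‖`. So the series `∑ (v i * w i) • C i` converges absolutely in `ℓ²`, to a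
vector of norm at most `√K ‖v‖ ‖w‖`; since the coordinates are continuous linear functionals,
this vector is the product of `v` and `w`.
-/

lemma memℓp_two_of_summable {f : ℕ → ℝ} (hf : Summable fun k => |f k| ^ 2) : Memℓp f 2 := by
  refine memℓp_gen ?_
  simpa using hf

lemma lp_two_norm_eq (f : lp (fun _ : ℕ => ℝ) 2) : ‖f‖ = √(∑' k, |f k| ^ 2) := by
  rw [lp.norm_eq_tsum_rpow (by norm_num), Real.sqrt_eq_rpow]
  simp

lemma lp_two_summable (f : lp (fun _ : ℕ => ℝ) 2) : Summable fun k => |f k| ^ 2 := by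
  simpa using (lp.memℓp f).summable (by norm_num)

lemma summable_and_tsum_abs_mul_le {v w : ℕ → ℝ} (hv : Summable fun i => |v i| ^ 2)
    (hw : Summable fun i => |w i| ^ 2) :
    (Summable fun i => |v i * w i|) ∧
      ∑' i, |v i * w i| ≤ √(∑' i, |v i| ^ 2) * √(∑' i, |w i| ^ 2) := by
  have h := Real.summable_and_inner_le_Lp_mul_Lq_tsum_of_nonneg (p := 2) (q := 2)
    Real.HolderConjugate.two_two
    (f := fun i => |v i|) (g := fun i => |w i|) (fun i => abs_nonneg _) (fun i => abs_nonneg _)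
    (by simpa using hv) (by simpa using hw)
  simpa [abs_mul, Real.sqrt_eq_rpow] using h

/-- Under the uniform column bound `∑_k |c_{ki}|² ≤ K`, the
evolution-algebra product of two square-summable sequences is well defined and
`‖v·w‖ ≤ √K ‖v‖ ‖w‖`. -/
theorem product_jointly_bounded (c : ℕ × ℕ → ℝ) (K : ℝ)
    (hcol : ∀ i, Summable (fun k => |c (k, i)| ^ 2))
    (hK : ∀ i, ∑' k, |c (k, i)| ^ 2 ≤ K) :
    ∀ v w : ℕ → ℝ, Summable (fun i => |v i| ^ 2) → Summable (fun i => |w i| ^ 2) →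
      (∀ k, Summable (fun i => v i * w i * c (k, i))) ∧
      Summable (fun k => |∑' i, v i * w i * c (k, i)| ^ 2) ∧
      Real.sqrt (∑' k, |∑' i, v i * w i * c (k, i)| ^ 2) ≤
        Real.sqrt K * Real.sqrt (∑' i, |v i| ^ 2) * Real.sqrt (∑' i, |w i| ^ 2) := by
  intro v w hv hw
  obtain ⟨hs, hle⟩ := summable_and_tsum_abs_mul_le hv hw
  let C : ℕ → lp (fun _ : ℕ => ℝ) 2 := fun i =>
    ⟨fun k => c (k, i), memℓp_two_of_summable (hcol i)⟩
  have hC : ∀ i, ‖C i‖ ≤ √K := fun i => by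
    rw [lp_two_norm_eq]
    exact Real.sqrt_le_sqrt (hK i)
  have hbound : ∀ i, ‖(v i * w i) • C i‖ ≤ √K * |v i * w i| := fun i => by
    rw [norm_smul, Real.norm_eq_abs, mul_comm]
    exact mul_le_mul_of_nonneg_right (hC i) (abs_nonneg _)
  have hsum : Summable fun i => (v i * w i) • C i := .of_norm_bounded (hs.mul_left _) hbound
  have hcoord : ∀ k, HasSum (fun i => v i * w i * c (k, i)) ((∑' i, (v i * w i) • C i) k) :=
    fun k => hsum.hasSum.mapL (lp.evalCLM ℝ (fun _ : ℕ => ℝ) 2 k)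
  -- From here on the product is the vector `∑ (v i * w i) • C i` of `ℓ²`.
  simp only [fun k => (hcoord k).tsum_eq]
  refine ⟨fun k => (hcoord k).summable, lp_two_summable _, ?_⟩
  rw [← lp_two_norm_eq, mul_assoc]
  calc ‖∑' i, (v i * w i) • C i‖ ≤ ∑' i, √K * |v i * w i| :=
        tsum_of_norm_bounded (hs.mul_left _).hasSum hbound
    _ = √K * ∑' i, |v i * w i| := tsum_mul_left
    _ ≤ _ := mul_le_mul_of_nonneg_left hle (Real.sqrt_nonneg _)
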